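/- arXiv:2402.07064 — 4 statements merged into one kernel-verified Lean document; each statement's English description precedes it below -/
import Mathlib

section
/- Let Ω = [ω̲, ω̄] ⊂ ℝ with 0 ≤ ω̲ < ω̄, written as Ω = {v ∈ ℝ : F_0 + vF_1 ⪰ 0} with F_0 = diag(−ω̲, ω̄) and F_1 = diag(1, −1), and fix x ∈ ℝ, γ_1, γ_2 ∈ ℝ. Consider the moment problem (N): minimize E_μ^Ω[min{x − ω, 0}] over probability measures μ on Ω subject to E_μ^Ω[ω] ≤ γ_1 and E_μ^Ω[ω²] ≤ γ_2. Consider the SDP (N1): maximize −λ_1γ_1 − λ_2γ_2 − λ_3 over λ ∈ ℝ_+² × ℝ and 2×2 PSD matrices Z, Z′ subject to the 2×2 matrices [[x + λ_3 − tr(ZF_0), ½(−1 + λ_1 − tr(ZF_1))], [½(−1 + λ_1 − tr(ZF_1)), λ_2]] and [[λ_3 − tr(Z′F_0), ½(λ_1 − tr(Z′F_1))], [½(λ_1 − tr(Z′F_1)), λ_2]] being positive semi-definite. Assume (N) admits a minimizer and (γ_1, γ_2, 1) ∈ int{{(E_μ^Ω[ω], E_μ^Ω[ω²], E_μ^Ω[1])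 : μ a non-negative finite Borel measure on Ω} + ℝ_+² × {0}}. Then min(N) = max(N1). -/
open MeasureTheory Matrix
open scoped BigOperators

noncomputable section

/-- The value set of the Newsvendor moment problem (N) with mean and
second-moment bounds over `Ω = [ω̲, ω̄]`. -/
def NewsVals (ωlo ωhi x γ1 γ2 : ℝ) : Set ℝ :=
  {val | ∃ μ : Measure ℝ, IsProbabilityMeasure μ ∧ μ (Set.Icc ωlo ωhi)ᶜ = 0 ∧
    (∫ ω, ω ∂μ) ≤ γ1 ∧ (∫ ω, ω ^ 2 ∂μ) ≤ γ2 ∧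
    val = ∫ ω, min (x - ω) 0 ∂μ}

/-- The value set of the SDP (N1). -/
def NewsSDPVals (ωlo ωhi x γ1 γ2 : ℝ) : Set ℝ :=
  {val | ∃ (lam1 lam2 lam3 : ℝ) (Z Z' : Matrix (Fin 2) (Fin 2) ℝ),
    0 ≤ lam1 ∧ 0 ≤ lam2 ∧ Z.PosSemidef ∧ Z'.PosSemidef ∧
    (!![x + lam3 - (Z * !![-ωlo, 0; 0, ωhi]).trace,
        (1 / 2) * (-1 + lam1 - (Z * !![(1:ℝ), 0; 0, -1]).trace);
        (1 / 2) * (-1 + lam1 - (Z * !![(1:ℝ), 0; 0, -1]).trace),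
        lam2]).PosSemidef ∧
    (!![lam3 - (Z' * !![-ωlo, 0; 0, ωhi]).trace,
        (1 / 2) * (lam1 - (Z' * !![(1:ℝ), 0; 0, -1]).trace);
        (1 / 2) * (lam1 - (Z' * !![(1:ℝ), 0; 0, -1]).trace),
        lam2]).PosSemidef ∧
    val = -lam1 * γ1 - lam2 * γ2 - lam3}

/-!
For a convex cone `K ⊆ E × ℝ` of achievable pairs (moment vector, cost), an optimal multiplier is a
linear functional `(e, t) ↦ t + ℓ e` that is nonnegative on `K` and vanishes at `(γ, p)`, where `p`
is the optimal value at `γ`. Adjoining the line `ℝ (γ, p)` to `K` turns this into extending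
`(0, t) ↦ t` positively from the cost axis. The M. Riesz extension theorem does so, because by
Slater's condition at `γ` the enlarged cone projects onto all of `E`. Testing positivity on Dirac
measures makes `ℓ` a pointwise certificate: with a minimum of two affine functions as cost, two
quadratics nonnegative on an interval. By the one-dimensional S-lemma these are the two
semidefinite constraints.
-/

section ConicDuality

variable {E : Type*} [AddCommGroup E] [Module ℝ E]

lemma exists_linearMap_forall_mem_nonneg (K : PointedCone ℝ (E × ℝ))
    (hzero : ∀ t, ((0 : E), t) ∈ K → 0 ≤ t) (hdom : ∀ e, ∃ t, (e, t) ∈ K) :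
    ∃ ℓ : E →ₗ[ℝ] ℝ, ∀ q ∈ K, 0 ≤ q.2 + ℓ q.1 := by
  let costAxis : Submodule ℝ (E × ℝ) := Submodule.prod ⊥ ⊤
  obtain ⟨g, hg, hgK⟩ := riesz_extension K ((LinearMap.snd ℝ E ℝ).toPMap costAxis)
    (by
      rintro ⟨⟨e, t⟩, he, _⟩ hK
      obtain rfl : e = 0 := he
      exact hzero t hK)
    (by
      rintro ⟨e, s⟩
      obtain ⟨t, ht⟩ := hdom e
      exact ⟨⟨(0, t - s), by simp [costAxis]⟩, by simpa using ht⟩)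
  refine ⟨g ∘ₗ LinearMap.inl ℝ E ℝ, fun q hq => ?_⟩
  have hsnd : g (0, q.2) = q.2 := (hg ⟨(0, q.2), by simp [costAxis]⟩).symm ▸ rfl
  calc 0 ≤ g q := hgK q hq
    _ = g (0, q.2) + g (q.1, 0) := by simp [← map_add]
    _ = q.2 + (g ∘ₗ LinearMap.inl ℝ E ℝ) q.1 := by rw [hsnd]; rfl

lemma mul_le_of_smul_mem_of_isGLB {K : PointedCone ℝ (E × ℝ)} {γ : E} {p b u : ℝ}
    (hp : IsGLB {t | (γ, t) ∈ K} p) (hu : (b • γ, u) ∈ K) : b * p ≤ u := by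
  -- Adding `n` copies of a nearly optimal pair `(γ, t)` makes the coefficient of `γ` positive.
  set n : ℝ := |b| + 1
  have hn : 0 < n := by positivity
  have hbn : 0 < b + n := by linarith [neg_abs_le b]
  have hlower : (b * p - u) / n + p ∈ lowerBounds {t | (γ, t) ∈ K} := by
    intro t ht
    have hscaled : (b + n)⁻¹ • ((b • γ, u) + n • (γ, t)) ∈ K :=
      K.smul_mem (inv_pos.2 hbn).le (K.add_mem hu (K.smul_mem hn.le ht))
    have hmem : (γ, (b + n)⁻¹ * (u + n * t)) ∈ K := by
      simpa [← add_smul, smul_smul, inv_mul_cancel₀ hbn.ne'] using hscaled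
    have hpt : (b + n) * p ≤ u + n * t := (le_inv_mul_iff₀ hbn).1 (hp.1 hmem)
    rw [← le_sub_iff_add_le, div_le_iff₀ hn]
    linarith
  have hnonpos : (b * p - u) / n ≤ 0 := by linarith [hp.2 hlower]
  rw [div_le_iff₀ hn] at hnonpos
  linarith

theorem exists_linearMap_nonneg_of_isGLB (K : PointedCone ℝ (E × ℝ)) {γ : E} {p : ℝ}
    (hcore : ∀ e, ∃ a t : ℝ, (a • γ + e, t) ∈ K) (hp : IsGLB {t | (γ, t) ∈ K} p) :
    ∃ ℓ : E →ₗ[ℝ] ℝ, (∀ q ∈ K, 0 ≤ q.2 + ℓ q.1) ∧ ℓ γ = -p := by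
  let line : PointedCone ℝ (E × ℝ) := (ℝ ∙ (γ, p) : Submodule ℝ (E × ℝ))
  have smul_mem_line (a : ℝ) : a • (γ, p) ∈ line := Submodule.mem_span_singleton.2 ⟨a, rfl⟩
  obtain ⟨ℓ, hℓ⟩ := exists_linearMap_forall_mem_nonneg (K ⊔ line)
    (by
      intro t ht
      obtain ⟨⟨e, u⟩, hK, z, hz, hsum⟩ := Submodule.mem_sup.1 ht
      obtain ⟨a, rfl⟩ := Submodule.mem_span_singleton.1 hz
      obtain ⟨he, rfl⟩ : e + a • γ = 0 ∧ u + a * p = t := by simpa using hsum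
      rw [eq_neg_of_add_eq_zero_left he, ← neg_smul] at hK
      linarith [mul_le_of_smul_mem_of_isGLB hp hK])
    (by
      intro e
      obtain ⟨a, t, hK⟩ := hcore e
      refine ⟨t + -a * p, Submodule.mem_sup.2 ⟨_, hK, _, smul_mem_line (-a), ?_⟩⟩
      simp)
  refine ⟨ℓ, fun q hq => hℓ q (Submodule.mem_sup_left hq), ?_⟩
  have hpos := hℓ _ (Submodule.mem_sup_right (smul_mem_line 1))
  have hneg := hℓ _ (Submodule.mem_sup_right (smul_mem_line (-1)))
  simp only [one_smul, neg_smul, Prod.snd_neg, Prod.fst_neg, map_neg] at hpos hneg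
  linarith

lemma exists_smul_add_mem_of_mem_interior [TopologicalSpace E] [ContinuousAdd E]
    [ContinuousSMul ℝ E] {C : PointedCone ℝ E} {γ : E} (hγ : γ ∈ interior (C : Set E)) (e : E) :
    ∃ a : ℝ, a • γ + e ∈ C := by
  have hlim : Filter.Tendsto (fun ε : ℝ => γ + ε • e) (nhdsWithin 0 (Set.Ioi 0)) (nhds γ) := by
    have hcont : Continuous fun ε : ℝ => γ + ε • e := by fun_prop
    simpa using (hcont.tendsto 0).mono_left nhdsWithin_le_nhds
  obtain ⟨ε, hmem, hε⟩ :=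
    ((hlim.eventually (mem_interior_iff_mem_nhds.1 hγ)).and self_mem_nhdsWithin).exists
  have hε : 0 < ε := hε
  refine ⟨ε⁻¹, ?_⟩
  simpa [smul_smul, inv_mul_cancel₀ hε.ne'] using C.smul_mem (inv_pos.2 hε).le hmem

end ConicDuality

section MomentDuality

variable {α E : Type*} [MeasurableSpace α] [NormedAddCommGroup E] [NormedSpace ℝ E]

/-- The cone of pairs `(e, t)` for which some finite measure `μ` carried by `S` satisfies the
moment constraint `e - ∫ φ dμ ∈ C` and has cost `∫ f dμ ≤ t`. Integrability of `φ` and `f` is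
required, since the integrals would otherwise take the junk value `0`. -/
def momentCone (S : Set α) (φ : α → E) (C : PointedCone ℝ E) (f : α → ℝ) :
    PointedCone ℝ (E × ℝ) where
  carrier := {q | ∃ μ : Measure α, IsFiniteMeasure μ ∧ μ Sᶜ = 0 ∧ Integrable φ μ ∧
    Integrable f μ ∧ q.1 - ∫ ω, φ ω ∂μ ∈ C ∧ ∫ ω, f ω ∂μ ≤ q.2}
  zero_mem' := ⟨0, inferInstance, by simp⟩
  add_mem' := by
    rintro q r ⟨μ, _, hμ, hφμ, hfμ, hqC, hqf⟩ ⟨ν, _, hν, hφν, hfν, hrC, hrf⟩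
    refine ⟨μ + ν, inferInstance, by simp [hμ, hν], hφμ.add_measure hφν, hfμ.add_measure hfν,
      ?_, ?_⟩
    · rw [integral_add_measure hφμ hφν, Prod.fst_add, add_sub_add_comm]
      exact C.add_mem hqC hrC
    · rw [integral_add_measure hfμ hfν]
      exact add_le_add hqf hrf
  smul_mem' := by
    rintro ⟨c, hc⟩ q ⟨μ, _, hμ, hφ, hf, hqC, hqf⟩
    refine ⟨ENNReal.ofReal c • μ, μ.smul_finite ENNReal.ofReal_ne_top, by simp [hμ],
      hφ.smul_measure ENNReal.ofReal_ne_top, hf.smul_measure ENNReal.ofReal_ne_top, ?_, ?_⟩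
    · rw [integral_smul_measure, ENNReal.toReal_ofReal hc]
      have hsmul := C.smul_mem hc hqC
      rw [smul_sub] at hsmul
      exact hsmul
    · rw [integral_smul_measure, ENNReal.toReal_ofReal hc]
      exact mul_le_mul_of_nonneg_left hqf hc

/-- The value set of the dual of the moment problem
`min {∫ f dμ : γ - ∫ φ dμ ∈ C, μ carried by S}`, over multipliers `ℓ` for the constraint. -/
def momentDualVals (S : Set α) (φ : α → E) (C : PointedCone ℝ E) (f : α → ℝ) (γ : E) : Set ℝ :=
  {v | ∃ ℓ : E →L[ℝ] ℝ, (∀ s ∈ C, 0 ≤ ℓ s) ∧ (∀ ω ∈ S, 0 ≤ f ω + ℓ (φ ω)) ∧ v = -ℓ γ}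

variable {S : Set α} {φ : α → E} {C : PointedCone ℝ E} {f : α → ℝ}

lemma prodMk_zero_mem_momentCone {s : E} (hs : s ∈ C) : (s, 0) ∈ momentCone S φ C f :=
  ⟨0, inferInstance, by simpa⟩

lemma prodMk_mem_momentCone [MeasurableSingletonClass α] [CompleteSpace E] {ω : α} (hω : ω ∈ S) :
    (φ ω, f ω) ∈ momentCone S φ C f :=
  ⟨Measure.dirac ω, inferInstance, by simp [hω], integrable_dirac (by simp),
    integrable_dirac (by simp), by simp, by simp⟩

lemma momentCone_forall_nonneg_iff [MeasurableSingletonClass α] [CompleteSpace E]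
    (ℓ : E →L[ℝ] ℝ) :
    (∀ q ∈ momentCone S φ C f, 0 ≤ q.2 + ℓ q.1) ↔
      (∀ s ∈ C, 0 ≤ ℓ s) ∧ ∀ ω ∈ S, 0 ≤ f ω + ℓ (φ ω) := by
  refine ⟨fun h => ⟨fun s hs => ?_, fun ω hω => h _ (prodMk_mem_momentCone hω)⟩, ?_⟩
  · simpa using h _ (prodMk_zero_mem_momentCone hs)
  · rintro ⟨hC, hS⟩ q ⟨μ, _, hμ, hφ, hf, hqC, hqf⟩
    have hslack : ∫ ω, ℓ (φ ω) ∂μ ≤ ℓ q.1 := by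
      simpa [ℓ.integral_comp_comm hφ] using hC _ hqC
    have hmem : ∀ᵐ ω ∂μ, ω ∈ S := hμ
    calc 0 ≤ ∫ ω, f ω + ℓ (φ ω) ∂μ := integral_nonneg_of_ae (hmem.mono hS)
      _ = ∫ ω, f ω ∂μ + ∫ ω, ℓ (φ ω) ∂μ := integral_add hf (ℓ.integrable_comp hφ)
      _ ≤ q.2 + ℓ q.1 := add_le_add hqf hslack

theorem isGreatest_momentDualVals [MeasurableSingletonClass α] [FiniteDimensional ℝ E] {γ : E}
    {p : ℝ} (hγ : γ ∈ interior ((momentCone S φ C f).map (LinearMap.fst ℝ E ℝ) : Set E))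
    (hp : IsGLB {t | (γ, t) ∈ momentCone S φ C f} p) :
    IsGreatest (momentDualVals S φ C f γ) p := by
  have := FiniteDimensional.complete ℝ E
  have hcore (e : E) : ∃ a t : ℝ, (a • γ + e, t) ∈ momentCone S φ C f := by
    obtain ⟨a, ha⟩ := exists_smul_add_mem_of_mem_interior hγ e
    obtain ⟨⟨_, t⟩, hmem, rfl⟩ := PointedCone.mem_map.1 ha
    exact ⟨a, t, hmem⟩
  constructor
  · obtain ⟨ℓ, hℓ, hℓγ⟩ := exists_linearMap_nonneg_of_isGLB _ hcore hp
    obtain ⟨hC, hS⟩ := (momentCone_forall_nonneg_iff ℓ.toContinuousLinearMap).1 hℓ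
    exact ⟨ℓ.toContinuousLinearMap, hC, hS, by simp [hℓγ]⟩
  · rintro _ ⟨ℓ, hC, hS, rfl⟩
    exact hp.2 fun t ht => neg_le_iff_add_nonneg.2
      ((momentCone_forall_nonneg_iff ℓ).2 ⟨hC, hS⟩ _ ht)

end MomentDuality

section SLemma

lemma posSemidef_fin_two_iff_forall_nonneg {a b c : ℝ} (hc : 0 ≤ c) :
    (!![a, b; b, c]).PosSemidef ↔ ∀ t : ℝ, 0 ≤ a + 2 * b * t + c * t ^ 2 := by
  have quadForm (w : Fin 2 → ℝ) : star w ⬝ᵥ (!![a, b; b, c] *ᵥ w) =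
      a * w 0 ^ 2 + 2 * b * w 0 * w 1 + c * w 1 ^ 2 := by
    simp only [dotProduct, Pi.star_apply, star_trivial, mulVec, of_apply, cons_val',
      cons_val_fin_one, Fin.sum_univ_two, Fin.isValue, cons_val_zero, cons_val_one]
    ring
  have hherm : (!![a, b; b, c]).IsHermitian := by
    ext i j
    fin_cases i <;> fin_cases j <;> simp
  simp only [posSemidef_iff_dotProduct_mulVec, quadForm, hherm, true_and]
  refine ⟨fun h t => by simpa using h ![1, t], fun h w => ?_⟩
  obtain hw | hw := eq_or_ne (w 0) 0
  · simpa [hw] using mul_nonneg hc (sq_nonneg (w 1))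
  · calc 0 ≤ w 0 ^ 2 * (a + 2 * b * (w 1 / w 0) + c * (w 1 / w 0) ^ 2) :=
        mul_nonneg (sq_nonneg _) (h _)
      _ = a * w 0 ^ 2 + 2 * b * w 0 * w 1 + c * w 1 ^ 2 := by field_simp

lemma trace_mul_diag_fin_two (Z : Matrix (Fin 2) (Fin 2) ℝ) (a b : ℝ) :
    (Z * !![a, 0; 0, b]).trace = Z 0 0 * a + Z 1 1 * b := by
  simp [trace, Fin.sum_univ_two, mul_apply]

lemma exists_Icc_multipliers {lo hi a b c : ℝ} (hle : lo ≤ hi) (hc : 0 ≤ c)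
    (h : ∀ v ∈ Set.Icc lo hi, 0 ≤ a + b * v + c * v ^ 2) :
    ∃ z₁ z₂ : ℝ, 0 ≤ z₁ ∧ 0 ≤ z₂ ∧
      ∀ t, z₁ * (t - lo) + z₂ * (hi - t) ≤ a + b * t + c * t ^ 2 := by
  have tangent (v t : ℝ) : a + b * v + c * v ^ 2 + (b + 2 * c * v) * (t - v) ≤
      a + b * t + c * t ^ 2 := by
    linarith [mul_nonneg hc (sq_nonneg (t - v))]
  -- The multiplier is the slope of the tangent at the minimizer over the interval.
  obtain hlo | hlo := le_or_gt 0 (b + 2 * c * lo)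
  · exact ⟨b + 2 * c * lo, 0, hlo, le_rfl, fun t => by
      linarith [tangent lo t, h lo (Set.left_mem_Icc.2 hle)]⟩
  obtain hhi | hhi := le_or_gt (b + 2 * c * hi) 0
  · exact ⟨0, -(b + 2 * c * hi), le_rfl, neg_nonneg.2 hhi, fun t => by
      linarith [tangent hi t, h hi (Set.right_mem_Icc.2 hle)]⟩
  have hcpos : 0 < c := hc.lt_of_ne fun h0 => by subst h0; linarith
  have hvertex : b + 2 * c * (-b / (2 * c)) = 0 := by field_simp; ring
  have hmem : -b / (2 * c) ∈ Set.Icc lo hi :=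
    ⟨(le_div_iff₀ (by positivity)).2 (by linarith), (div_le_iff₀ (by positivity)).2 (by linarith)⟩
  refine ⟨0, 0, le_rfl, le_rfl, fun t => ?_⟩
  have htangent := tangent (-b / (2 * c)) t
  rw [hvertex] at htangent
  linarith [h _ hmem]

theorem forall_Icc_nonneg_iff_exists_posSemidef {lo hi a b c : ℝ} (hle : lo ≤ hi) (hc : 0 ≤ c) :
    (∀ v ∈ Set.Icc lo hi, 0 ≤ a + b * v + c * v ^ 2) ↔
      ∃ Z : Matrix (Fin 2) (Fin 2) ℝ, Z.PosSemidef ∧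
        (!![a - (Z * !![-lo, 0; 0, hi]).trace,
            (1 / 2) * (b - (Z * !![(1 : ℝ), 0; 0, -1]).trace);
            (1 / 2) * (b - (Z * !![(1 : ℝ), 0; 0, -1]).trace), c]).PosSemidef := by
  simp only [posSemidef_fin_two_iff_forall_nonneg hc, trace_mul_diag_fin_two]
  constructor
  · intro h
    obtain ⟨z₁, z₂, hz₁, hz₂, hz⟩ := exists_Icc_multipliers hle hc h
    refine ⟨diagonal ![z₁, z₂], .diagonal ?_, fun t => ?_⟩
    · intro i
      fin_cases i <;> simpa
    · simp only [diagonal_apply_eq, cons_val_zero, cons_val_one]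
      linarith [hz t]
  · rintro ⟨Z, hZ, hquad⟩ v ⟨hlo, hhi⟩
    have hZlo := mul_nonneg (hZ.diag_nonneg (i := 0)) (sub_nonneg.2 hlo)
    have hZhi := mul_nonneg (hZ.diag_nonneg (i := 1)) (sub_nonneg.2 hhi)
    linarith [hquad v]

end SLemma

section Newsvendor

/-- The slack cone `ℝ₊² × {0}`: mean and second moment are bounded above, total mass is fixed. -/
def newsSlackCone : PointedCone ℝ (ℝ × ℝ × ℝ) :=
  (PointedCone.positive ℝ ℝ).prod ((PointedCone.positive ℝ ℝ).prod ⊥)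

lemma mem_newsSlackCone {s : ℝ × ℝ × ℝ} :
    s ∈ newsSlackCone ↔ 0 ≤ s.1 ∧ 0 ≤ s.2.1 ∧ s.2.2 = 0 := by
  simp [newsSlackCone, Submodule.mem_prod]

/-- The moment cone of the Newsvendor problem, with total mass as the last moment so that
probability measures are those with last moment `1`. -/
def newsMomentCone (lo hi x : ℝ) : PointedCone ℝ ((ℝ × ℝ × ℝ) × ℝ) :=
  momentCone (Set.Icc lo hi) (fun ω => (ω, ω ^ 2, 1)) newsSlackCone fun ω => min (x - ω) 0

/-- The linear functional on `ℝ × ℝ × ℝ` with coefficients `l`. -/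
def linearFormOfCoeffs (l : ℝ × ℝ × ℝ) : ℝ × ℝ × ℝ →L[ℝ] ℝ :=
  (ContinuousLinearMap.toSpanSingleton ℝ l.1).coprod
    ((ContinuousLinearMap.toSpanSingleton ℝ l.2.1).coprod
      (ContinuousLinearMap.toSpanSingleton ℝ l.2.2))

lemma linearFormOfCoeffs_apply (l q : ℝ × ℝ × ℝ) :
    linearFormOfCoeffs l q = l.1 * q.1 + l.2.1 * q.2.1 + l.2.2 * q.2.2 := by
  simp only [linearFormOfCoeffs, ContinuousLinearMap.coprod_apply,
    ContinuousLinearMap.toSpanSingleton_apply, smul_eq_mul]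
  ring

lemma linearFormOfCoeffs_surjective : Function.Surjective linearFormOfCoeffs := by
  refine fun ℓ => ⟨(ℓ (1, 0, 0), ℓ (0, 1, 0), ℓ (0, 0, 1)), ?_⟩
  ext <;> simp [linearFormOfCoeffs_apply, ← Prod.mk_zero_zero]

lemma linearFormOfCoeffs_nonneg_on_newsSlackCone_iff {l : ℝ × ℝ × ℝ} :
    (∀ s ∈ newsSlackCone, 0 ≤ linearFormOfCoeffs l s) ↔ 0 ≤ l.1 ∧ 0 ≤ l.2.1 := by
  simp only [mem_newsSlackCone, linearFormOfCoeffs_apply]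
  refine ⟨fun h => ⟨by simpa using h (1, 0, 0), by simpa using h (0, 1, 0)⟩, ?_⟩
  rintro ⟨h₁, h₂⟩ s ⟨hs₁, hs₂, hs₃⟩
  rw [hs₃, mul_zero, add_zero]
  positivity

lemma integrable_of_compl_Icc_null {lo hi : ℝ} {E : Type*} [NormedAddCommGroup E]
    {μ : Measure ℝ} [IsFiniteMeasure μ] (hμ : μ (Set.Icc lo hi)ᶜ = 0) {f : ℝ → E}
    (hf : Continuous f) : Integrable f μ := by
  rw [← Measure.restrict_eq_self_of_ae_mem (μ := μ) (s := Set.Icc lo hi) hμ]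
  exact hf.continuousOn.integrableOn_compact isCompact_Icc

lemma integral_newsMoments {lo hi : ℝ} {μ : Measure ℝ} [IsFiniteMeasure μ]
    (hμ : μ (Set.Icc lo hi)ᶜ = 0) :
    ∫ ω, (ω, ω ^ 2, (1 : ℝ)) ∂μ = (∫ ω, ω ∂μ, ∫ ω, ω ^ 2 ∂μ, (μ Set.univ).toReal) := by
  rw [integral_pair, integral_pair, integral_const, smul_eq_mul, mul_one, measureReal_def] <;>
    exact integrable_of_compl_Icc_null hμ (by fun_prop)

variable {lo hi x : ℝ}

lemma mem_newsMomentCone_iff {γ₁ γ₂ m t : ℝ} :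
    ((γ₁, γ₂, m), t) ∈ newsMomentCone lo hi x ↔
      ∃ μ : Measure ℝ, IsFiniteMeasure μ ∧ μ (Set.Icc lo hi)ᶜ = 0 ∧ ∫ ω, ω ∂μ ≤ γ₁ ∧
        ∫ ω, ω ^ 2 ∂μ ≤ γ₂ ∧ m = (μ Set.univ).toReal ∧ ∫ ω, min (x - ω) 0 ∂μ ≤ t := by
  refine exists_congr fun μ => and_congr_right fun _ => and_congr_right fun hμ => ?_
  have hφ : Integrable (fun ω : ℝ => (ω, ω ^ 2, (1 : ℝ))) μ :=
    integrable_of_compl_Icc_null hμ (by fun_prop)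
  have hf : Integrable (fun ω => min (x - ω) 0) μ := integrable_of_compl_Icc_null hμ (by fun_prop)
  simp only [hφ, hf, true_and, integral_newsMoments hμ, mem_newsSlackCone, Prod.mk_sub_mk,
    sub_nonneg, sub_eq_zero, and_assoc]

lemma setOf_mem_newsMomentCone_eq_upperClosure (γ₁ γ₂ : ℝ) :
    {t | ((γ₁, γ₂, 1), t) ∈ newsMomentCone lo hi x} = upperClosure (NewsVals lo hi x γ₁ γ₂) := by
  ext t
  simp only [Set.mem_ofPred_eq, mem_newsMomentCone_iff, SetLike.mem_coe, mem_upperClosure]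
  constructor
  · rintro ⟨μ, _, hμ, h₁, h₂, hmass, ht⟩
    exact ⟨_, ⟨μ, ⟨(ENNReal.toReal_eq_one_iff _).1 hmass.symm⟩, hμ, h₁, h₂, rfl⟩, ht⟩
  · rintro ⟨_, ⟨μ, _, hμ, h₁, h₂, rfl⟩, ht⟩
    exact ⟨μ, inferInstance, hμ, h₁, h₂, by simp, ht⟩

lemma le_of_nonempty_newsVals {γ₁ γ₂ : ℝ} (h : (NewsVals lo hi x γ₁ γ₂).Nonempty) : lo ≤ hi := by
  obtain ⟨_, μ, _, hμ, -⟩ := h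
  by_contra! hlt
  simp [Set.Icc_eq_empty_of_lt hlt] at hμ

lemma forall_Icc_min_add_nonneg_iff {l₁ l₂ l₃ : ℝ} (hle : lo ≤ hi) (hl₂ : 0 ≤ l₂) :
    (∀ ω ∈ Set.Icc lo hi, 0 ≤ min (x - ω) 0 + (l₁ * ω + l₂ * ω ^ 2 + l₃)) ↔
      ∃ Z Z' : Matrix (Fin 2) (Fin 2) ℝ, Z.PosSemidef ∧ Z'.PosSemidef ∧
        (!![x + l₃ - (Z * !![-lo, 0; 0, hi]).trace,
            (1 / 2) * (-1 + l₁ - (Z * !![(1 : ℝ), 0; 0, -1]).trace);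
            (1 / 2) * (-1 + l₁ - (Z * !![(1 : ℝ), 0; 0, -1]).trace), l₂]).PosSemidef ∧
        (!![l₃ - (Z' * !![-lo, 0; 0, hi]).trace,
            (1 / 2) * (l₁ - (Z' * !![(1 : ℝ), 0; 0, -1]).trace);
            (1 / 2) * (l₁ - (Z' * !![(1 : ℝ), 0; 0, -1]).trace), l₂]).PosSemidef := by
  have hsplit (ω : ℝ) : 0 ≤ min (x - ω) 0 + (l₁ * ω + l₂ * ω ^ 2 + l₃) ↔
      0 ≤ x + l₃ + (-1 + l₁) * ω + l₂ * ω ^ 2 ∧ 0 ≤ l₃ + l₁ * ω + l₂ * ω ^ 2 := by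
    rw [min_add, le_min_iff]
    ring_nf
  simp only [hsplit, forall_and, forall_Icc_nonneg_iff_exists_posSemidef hle hl₂]
  constructor
  · rintro ⟨⟨Z, hZ, hpsd⟩, ⟨Z', hZ', hpsd'⟩⟩
    exact ⟨Z, Z', hZ, hZ', hpsd, hpsd'⟩
  · rintro ⟨Z, Z', hZ, hZ', hpsd, hpsd'⟩
    exact ⟨⟨Z, hZ, hpsd⟩, ⟨Z', hZ', hpsd'⟩⟩

lemma newsSDPVals_eq_momentDualVals (hle : lo ≤ hi) (γ₁ γ₂ : ℝ) :
    NewsSDPVals lo hi x γ₁ γ₂ = momentDualVals (Set.Icc lo hi) (fun ω => (ω, ω ^ 2, 1))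
      newsSlackCone (fun ω => min (x - ω) 0) (γ₁, γ₂, 1) := by
  ext v
  have hval (l₁ l₂ l₃ : ℝ) :
      -l₁ * γ₁ - l₂ * γ₂ - l₃ = -linearFormOfCoeffs (l₁, l₂, l₃) (γ₁, γ₂, 1) := by
    rw [linearFormOfCoeffs_apply]
    ring
  simp only [NewsSDPVals, momentDualVals, Set.mem_ofPred_eq, linearFormOfCoeffs_surjective.exists,
    Prod.exists, linearFormOfCoeffs_nonneg_on_newsSlackCone_iff, hval]
  refine exists₃_congr fun l₁ l₂ l₃ => ?_
  simp only [linearFormOfCoeffs_apply, mul_one]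
  constructor
  · rintro ⟨Z, Z', h₁, h₂, hZ, hZ', hpsd, hpsd', hv⟩
    exact ⟨⟨h₁, h₂⟩, (forall_Icc_min_add_nonneg_iff hle h₂).2 ⟨Z, Z', hZ, hZ', hpsd, hpsd'⟩, hv⟩
  · rintro ⟨⟨h₁, h₂⟩, hnonneg, hv⟩
    obtain ⟨Z, Z', hZ, hZ', hpsd, hpsd'⟩ := (forall_Icc_min_add_nonneg_iff hle h₂).1 hnonneg
    exact ⟨Z, Z', h₁, h₂, hZ, hZ', hpsd, hpsd', hv⟩

end Newsvendor

theorem newsvendor_sdp_duality_general (ωlo ωhi x γ1 γ2 : ℝ)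
    (hint : ((γ1, γ2, (1 : ℝ)) : ℝ × ℝ × ℝ) ∈ interior
      {q : ℝ × ℝ × ℝ | ∃ μ : Measure ℝ, IsFiniteMeasure μ ∧
        μ (Set.Icc ωlo ωhi)ᶜ = 0 ∧ ∃ s1 s2 : ℝ, 0 ≤ s1 ∧ 0 ≤ s2 ∧
        q.1 = (∫ ω, ω ∂μ) + s1 ∧ q.2.1 = (∫ ω, ω ^ 2 ∂μ) + s2 ∧
        q.2.2 = (μ Set.univ).toReal})
    (p : ℝ) (hp : IsGLB (NewsVals ωlo ωhi x γ1 γ2) p) :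
    IsGreatest (NewsSDPVals ωlo ωhi x γ1 γ2) p := by
  rw [newsSDPVals_eq_momentDualVals (le_of_nonempty_newsVals hp.nonempty)]
  have hslater : (γ1, γ2, 1) ∈
      interior ((newsMomentCone ωlo ωhi x).map (LinearMap.fst ℝ _ ℝ) : Set (ℝ × ℝ × ℝ)) := by
    refine interior_mono ?_ hint
    rintro ⟨_, _, _⟩ ⟨μ, hfin, hμ, s₁, s₂, hs₁, hs₂, rfl, rfl, rfl⟩
    exact PointedCone.mem_map.2 ⟨(_, ∫ ω, min (x - ω) 0 ∂μ), mem_newsMomentCone_iff.2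
      ⟨μ, hfin, hμ, le_add_of_nonneg_right hs₁, le_add_of_nonneg_right hs₂, rfl, le_rfl⟩, rfl⟩
  have hglb : IsGLB {t | ((γ1, γ2, 1), t) ∈ newsMomentCone ωlo ωhi x} p := by
    rwa [setOf_mem_newsMomentCone_eq_upperClosure, IsGLB, lowerBounds_upperClosure]
  exact isGreatest_momentDualVals hslater hglb

/-- Exact SDP reformulation of the single-product Newsvendor
moment problem with mean and second-moment bounds: `min (N) = max (N1)`. -/
theorem newsvendor_sdp_duality (ωlo ωhi x γ1 γ2 : ℝ)
    (h0 : 0 ≤ ωlo) (hlt : ωlo < ωhi)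
    (hint : ((γ1, γ2, (1 : ℝ)) : ℝ × ℝ × ℝ) ∈ interior
      {q : ℝ × ℝ × ℝ | ∃ μ : Measure ℝ, IsFiniteMeasure μ ∧
        μ (Set.Icc ωlo ωhi)ᶜ = 0 ∧ ∃ s1 s2 : ℝ, 0 ≤ s1 ∧ 0 ≤ s2 ∧
        q.1 = (∫ ω, ω ∂μ) + s1 ∧ q.2.1 = (∫ ω, ω ^ 2 ∂μ) + s2 ∧
        q.2.2 = (μ Set.univ).toReal})
    (p : ℝ) (hmin : IsLeast (NewsVals ωlo ωhi x γ1 γ2) p) :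
    IsGreatest (NewsSDPVals ωlo ωhi x γ1 γ2) p := by
  exact newsvendor_sdp_duality_general ωlo ωhi x γ1 γ2 hint p hmin.isGLB

end
end

section
/- In the setting of the single-product Newsvendor moment problem (N) over Ω = [ω̲, ω̄] with mean and second-moment bounds γ_1, γ_2, assume (N) admits a minimizer, the interior point condition (γ_1, γ_2, 1) ∈ int{{(E_μ^Ω[ω], E_μ^Ω[ω²], E_μ^Ω[1]) : μ ⪰ 0} + ℝ_+² × {0}} holds, and max(N1) = min(N2), where (N2) is the SDP: minimize z¹ + z² over y¹, y² ∈ ℝ³ and z¹, z² ∈ ℝ subject to y_1¹ + y_1² ≤ γ_1, y_2¹ + y_2² ≤ γ_2, y_0¹ + y_0² = 1, x y_0¹ − y_1¹ ≤ z¹, 0 ≤ z², and for k=1,2: y_0^k F_0 + y_1^k F_1 ⪰ 0 and [[y_0^k, y_1^k],[y_1^k, y_2^k]] ⪰ 0. Let (ȳ^k, z̄^k) be a minimizer of (N2) with ȳ_0^k > 0 for k = 1,2, and set û^k = ȳ_1^k / ȳ_0^k. Then the measure ȳ_0¹ 𝟙_{û¹} + ȳ_0² 𝟙_{û²} is a minimizer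 of (N). -/
open MeasureTheory Matrix
open scoped BigOperators

noncomputable section

/-- Feasibility for the recovery SDP (N2). -/
def News2Feasible (ωlo ωhi x γ1 γ2 : ℝ) (y : Fin 2 → Fin 3 → ℝ)
    (z : Fin 2 → ℝ) : Prop :=
  y 0 1 + y 1 1 ≤ γ1 ∧ y 0 2 + y 1 2 ≤ γ2 ∧ y 0 0 + y 1 0 = 1 ∧
  x * y 0 0 - y 0 1 ≤ z 0 ∧ 0 ≤ z 1 ∧
  (∀ k, ((y k 0) • !![-ωlo, 0; 0, ωhi] + (y k 1) • !![(1:ℝ), 0; 0, -1]).PosSemidef) ∧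
  (∀ k, (!![y k 0, y k 1; y k 1, y k 2]).PosSemidef)

/-!
Each half of the argument is a comparison with the common SDP value `z¹ + z²`. A dual feasible
point of (N1) certifies that the quadratic `-λ₁ω - λ₂ω² - λ₃` lies below both affine pieces `x - ω`
and `0` of the objective on `Ω`, because `tr (Z (F₀ + ωF₁)) ≥ 0` there; integrating, every feasible
measure of (N) has objective at least the dual value. Conversely, a feasible point of (N2) splits a
moment vector of total mass one into one truncated moment vector per affine piece. Collapsing the
`k`-th part to an atom at its barycentre `û k` keeps the mass and the mean, does not increase the
second moment (Jensen), and pays at most the `k`-th piece, so the objective is at most `z¹ + z²`.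
-/

section PosSemidef

open scoped ComplexOrder MatrixOrder in
lemma trace_mul_nonneg_of_posSemidef {n 𝕜 : Type*} [Fintype n] [RCLike 𝕜]
    {A B : Matrix n n 𝕜} (hA : A.PosSemidef) (hB : B.PosSemidef) : 0 ≤ (A * B).trace := by
  classical
  obtain ⟨C, rfl⟩ := CStarAlgebra.nonneg_iff_eq_star_mul_self.mp hA.nonneg
  rw [mul_assoc, trace_mul_comm]
  exact (hB.mul_mul_conjTranspose_same C).trace_nonneg

lemma binaryForm_nonneg_of_posSemidef {a b c : ℝ} (h : !![a, b; b, c].PosSemidef) (s t : ℝ) :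
    0 ≤ a * s ^ 2 + 2 * b * s * t + c * t ^ 2 := by
  calc
    0 ≤ star ![s, t] ⬝ᵥ (!![a, b; b, c] *ᵥ ![s, t]) := h.dotProduct_mulVec_nonneg _
    _ = a * s ^ 2 + 2 * b * s * t + c * t ^ 2 := by
      simp only [star_trivial, mulVec, dotProduct, Fin.sum_univ_two, of_apply, cons_val_zero,
        cons_val_one, cons_val', cons_val_fin_one]
      ring

lemma interval_pencil_posSemidef_iff {lo hi s t : ℝ} :
    (s • !![-lo, 0; 0, hi] + t • !![(1 : ℝ), 0; 0, -1]).PosSemidef ↔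
      s * lo ≤ t ∧ t ≤ s * hi := by
  have diagonal_form : s • !![-lo, 0; 0, hi] + t • !![(1 : ℝ), 0; 0, -1] =
      diagonal ![t - s * lo, s * hi - t] := by
    ext i j
    fin_cases i <;> fin_cases j <;> simp <;> ring
  rw [diagonal_form, posSemidef_diagonal_iff, Fin.forall_fin_two]
  simp only [cons_val_zero, cons_val_one, sub_nonneg]

lemma quadratic_nonneg_of_pencil_certificate {n : Type*} [Fintype n] {F₀ F₁ Z : Matrix n n ℝ}
    {a b c ω : ℝ} (hF : (F₀ + ω • F₁).PosSemidef) (hZ : Z.PosSemidef)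
    (h : !![a - (Z * F₀).trace, 1 / 2 * (b - (Z * F₁).trace);
      1 / 2 * (b - (Z * F₁).trace), c].PosSemidef) :
    0 ≤ a + b * ω + c * ω ^ 2 := by
  have trace_nonneg : 0 ≤ (Z * F₀).trace + ω * (Z * F₁).trace := by
    simpa only [mul_add, Matrix.mul_smul, trace_add, trace_smul, smul_eq_mul]
      using trace_mul_nonneg_of_posSemidef hZ hF
  have form_nonneg := binaryForm_nonneg_of_posSemidef h 1 ω
  linarith

end PosSemidef

section AtomicMeasure

variable {ι α : Type*} [Fintype ι] [MeasurableSpace α]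

/-- The finitely supported measure `∑ i, p i • δ_{u i}`. Negative weights are truncated to `0`. -/
def atomicMeasure (p : ι → ℝ) (u : ι → α) : Measure α :=
  ∑ i, ENNReal.ofReal (p i) • Measure.dirac (u i)

variable {p : ι → ℝ} {u : ι → α}

lemma isProbabilityMeasure_atomicMeasure (hp : ∀ i, 0 ≤ p i) (hsum : ∑ i, p i = 1) :
    IsProbabilityMeasure (atomicMeasure p u) where
  measure_univ := by
    simp only [atomicMeasure, Measure.finsetSum_apply, Measure.smul_apply, measure_univ,
      smul_eq_mul, mul_one]
    rw [← ENNReal.ofReal_sum_of_nonneg fun i _ ↦ hp i, hsum, ENNReal.ofReal_one]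

lemma atomicMeasure_compl_eq_zero [MeasurableSingletonClass α] {s : Set α}
    (hu : ∀ i, 0 < p i → u i ∈ s) : atomicMeasure p u sᶜ = 0 := by
  simp only [atomicMeasure, Measure.finsetSum_apply, Measure.smul_apply, Measure.dirac_apply,
    smul_eq_mul]
  refine Finset.sum_eq_zero fun i _ ↦ ?_
  rcases lt_or_ge 0 (p i) with hpos | hnonpos
  · simp [hu i hpos]
  · simp [ENNReal.ofReal_of_nonpos hnonpos]

lemma integral_atomicMeasure [MeasurableSingletonClass α] {E : Type*} [NormedAddCommGroup E]
    [NormedSpace ℝ E] [CompleteSpace E] (hp : ∀ i, 0 ≤ p i) (f : α → E) :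
    ∫ a, f a ∂atomicMeasure p u = ∑ i, p i • f (u i) := by
  have integrable_atom (i : ι) :
      Integrable f (ENNReal.ofReal (p i) • Measure.dirac (u i)) :=
    (integrable_dirac enorm_lt_top).smul_measure ENNReal.ofReal_ne_top
  rw [atomicMeasure, integral_finsetSum_measure fun i _ ↦ integrable_atom i]
  simp only [integral_smul_measure, integral_dirac, ENNReal.toReal_ofReal (hp _)]

end AtomicMeasure

section MomentDuality

lemma integrable_of_continuousOn_of_ae_mem_isCompact {X E : Type*} [TopologicalSpace X]
    [T2Space X] [MeasurableSpace X] [OpensMeasurableSpace X]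
    [NormedAddCommGroup E] {μ : Measure X} [IsFiniteMeasureOnCompacts μ] {K : Set X} {f : X → E}
    (hK : IsCompact K) (hμ : ∀ᵐ a ∂μ, a ∈ K) (hf : ContinuousOn f K) : Integrable f μ := by
  have integrableOn : IntegrableOn f K μ := hf.integrableOn_compact hK
  rwa [IntegrableOn, Measure.restrict_eq_self_of_ae_mem hμ] at integrableOn

lemma le_integral_of_moment_minorant {ι α : Type*} [Fintype ι] [MeasurableSpace α]
    {μ : Measure α} [IsProbabilityMeasure μ] {φ : ι → α → ℝ} {f : α → ℝ} {l γ : ι → ℝ} {c : ℝ}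
    (hφ : ∀ i, Integrable (φ i) μ) (hf : Integrable f μ) (hl : ∀ i, 0 ≤ l i)
    (hγ : ∀ i, ∫ a, φ i a ∂μ ≤ γ i) (hle : ∀ᵐ a ∂μ, c - ∑ i, l i * φ i a ≤ f a) :
    c - ∑ i, l i * γ i ≤ ∫ a, f a ∂μ := by
  have integrable_sum : Integrable (fun a ↦ ∑ i, l i * φ i a) μ :=
    integrable_finsetSum _ fun i _ ↦ (hφ i).const_mul (l i)
  calc
    c - ∑ i, l i * γ i ≤ c - ∑ i, l i * ∫ a, φ i a ∂μ := by
      gcongr with i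
      · exact hl i
      · exact hγ i
    _ = ∫ a, (c - ∑ i, l i * φ i a) ∂μ := by
      rw [integral_sub (integrable_const c) integrable_sum,
        integral_finsetSum _ fun i _ ↦ (hφ i).const_mul (l i)]
      simp only [integral_const_mul, integral_const, probReal_univ, one_smul]
    _ ≤ ∫ a, f a ∂μ := integral_mono_ae ((integrable_const c).sub integrable_sum) hf hle

end MomentDuality

section Newsvendor

variable {ωlo ωhi x γ1 γ2 : ℝ}

/-- Feasibility of a measure for the moment problem (N); the condition `μ (Set.Icc ωlo ωhi)ᶜ = 0`
encodes that `μ` is a measure on `Ω`. -/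
def NewsFeasible (ωlo ωhi γ1 γ2 : ℝ) (μ : Measure ℝ) : Prop :=
  IsProbabilityMeasure μ ∧ μ (Set.Icc ωlo ωhi)ᶜ = 0 ∧
    ∫ ω, ω ∂μ ≤ γ1 ∧ ∫ ω, ω ^ 2 ∂μ ≤ γ2

lemma newsSDPVals_le_newsVals {d v : ℝ} (hd : d ∈ NewsSDPVals ωlo ωhi x γ1 γ2)
    (hv : v ∈ NewsVals ωlo ωhi x γ1 γ2) : d ≤ v := by
  obtain ⟨l₁, l₂, l₃, Z, Z', hl₁, hl₂, hZ, hZ', hx, hzero, rfl⟩ := hd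
  obtain ⟨μ, hμ, hsupp, hmean, hsecond, rfl⟩ := hv
  have ae_mem : ∀ᵐ ω ∂μ, ω ∈ Set.Icc ωlo ωhi := hsupp
  have integrable {g : ℝ → ℝ} (hg : Continuous g) : Integrable g μ :=
    integrable_of_continuousOn_of_ae_mem_isCompact isCompact_Icc ae_mem hg.continuousOn
  have minorant (ω : ℝ) (hω : ω ∈ Set.Icc ωlo ωhi) :
      -l₃ - (l₁ * ω + l₂ * ω ^ 2) ≤ min (x - ω) 0 := by
    have pencil : (!![-ωlo, 0; 0, ωhi] + ω • !![(1 : ℝ), 0; 0, -1]).PosSemidef := by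
      simpa only [one_smul, one_mul] using
        interval_pencil_posSemidef_iff (s := 1).mpr (by simpa only [one_mul, Set.mem_Icc] using hω)
    have below_x := quadratic_nonneg_of_pencil_certificate pencil hZ hx
    have below_zero := quadratic_nonneg_of_pencil_certificate pencil hZ' hzero
    apply le_min <;> linarith
  have bound := le_integral_of_moment_minorant (μ := μ) (φ := ![fun ω ↦ ω, fun ω ↦ ω ^ 2])
    (f := fun ω ↦ min (x - ω) 0) (l := ![l₁, l₂]) (γ := ![γ1, γ2]) (c := -l₃)
    (Fin.forall_fin_two.mpr ⟨integrable continuous_id, integrable (continuous_pow 2)⟩)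
    (integrable (by fun_prop)) (Fin.forall_fin_two.mpr ⟨hl₁, hl₂⟩)
    (Fin.forall_fin_two.mpr ⟨hmean, hsecond⟩)
    (by simpa only [Fin.sum_univ_two, cons_val_zero, cons_val_one] using ae_mem.mono minorant)
  simp only [Fin.sum_univ_two, cons_val_zero, cons_val_one] at bound
  linarith

variable {y : Fin 2 → Fin 3 → ℝ} {z : Fin 2 → ℝ} {u : Fin 2 → ℝ}

lemma News2Feasible.weight_nonneg (h : News2Feasible ωlo ωhi x γ1 γ2 y z) (k : Fin 2) :
    0 ≤ y k 0 := by
  obtain ⟨-, -, -, -, -, -, hmoment⟩ := h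
  exact (hmoment k).diag_nonneg (i := 0)

lemma News2Feasible.newsFeasible_atomicMeasure (h : News2Feasible ωlo ωhi x γ1 γ2 y z)
    (hu : ∀ k, y k 1 = y k 0 * u k) :
    NewsFeasible ωlo ωhi γ1 γ2 (atomicMeasure (fun k ↦ y k 0) u) := by
  have weight_nonneg := h.weight_nonneg
  obtain ⟨hmean, hsecond, hmass, -, -, hpencil, hmoment⟩ := h
  have atom_mem (k : Fin 2) (hk : 0 < y k 0) : u k ∈ Set.Icc ωlo ωhi := by
    have bounds := interval_pencil_posSemidef_iff.mp (hpencil k)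
    rw [hu k] at bounds
    exact ⟨le_of_mul_le_mul_left bounds.1 hk, le_of_mul_le_mul_left bounds.2 hk⟩
  have second_moment_le (k : Fin 2) : y k 0 * u k ^ 2 ≤ y k 2 := by
    have form_nonneg := binaryForm_nonneg_of_posSemidef (hmoment k) (-u k) 1
    rw [hu k] at form_nonneg
    linarith
  refine ⟨isProbabilityMeasure_atomicMeasure weight_nonneg (by rwa [Fin.sum_univ_two]),
    atomicMeasure_compl_eq_zero atom_mem, ?_, ?_⟩
  · simpa only [integral_atomicMeasure weight_nonneg, Fin.sum_univ_two, smul_eq_mul, hu]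
      using hmean
  · rw [integral_atomicMeasure weight_nonneg, Fin.sum_univ_two]
    exact (add_le_add (second_moment_le 0) (second_moment_le 1)).trans hsecond

lemma News2Feasible.integral_atomicMeasure_le (h : News2Feasible ωlo ωhi x γ1 γ2 y z)
    (hu : ∀ k, y k 1 = y k 0 * u k) :
    ∫ ω, min (x - ω) 0 ∂atomicMeasure (fun k ↦ y k 0) u ≤ z 0 + z 1 := by
  have weight_nonneg := h.weight_nonneg
  obtain ⟨-, -, -, hz₀, hz₁, -, -⟩ := h
  calc
    ∫ ω, min (x - ω) 0 ∂atomicMeasure (fun k ↦ y k 0) u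
        = y 0 0 * min (x - u 0) 0 + y 1 0 * min (x - u 1) 0 := by
      simp only [integral_atomicMeasure weight_nonneg, Fin.sum_univ_two, smul_eq_mul]
    _ ≤ y 0 0 * (x - u 0) + y 1 0 * 0 := by
      gcongr
      · exact weight_nonneg 0
      · exact min_le_left _ _
      · exact weight_nonneg 1
      · exact min_le_right _ _
    _ = x * y 0 0 - y 0 1 := by rw [hu 0]; ring
    _ ≤ z 0 + z 1 := by linarith

-- Here `u k` is `û k`; written without division, an atom of weight `0` may sit anywhere.
theorem newsvendor_recovery_general (hfeas : News2Feasible ωlo ωhi x γ1 γ2 y z)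
    (hdual : z 0 + z 1 ∈ NewsSDPVals ωlo ωhi x γ1 γ2) (hu : ∀ k, y k 1 = y k 0 * u k) :
    NewsFeasible ωlo ωhi γ1 γ2 (atomicMeasure (fun k ↦ y k 0) u) ∧
      ∀ v ∈ NewsVals ωlo ωhi x γ1 γ2,
        ∫ ω, min (x - ω) 0 ∂atomicMeasure (fun k ↦ y k 0) u ≤ v :=
  ⟨hfeas.newsFeasible_atomicMeasure hu, fun _ hv ↦
    (hfeas.integral_atomicMeasure_le hu).trans (newsSDPVals_le_newsVals hdual hv)⟩

end Newsvendor

/-- Recovering an optimal probability measure for the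
Newsvendor moment problem from a minimizer of the SDP (N2). -/
theorem newsvendor_recovery (ωlo ωhi x γ1 γ2 : ℝ)
    (h0 : 0 ≤ ωlo) (hlt : ωlo < ωhi)
    (hPmin : ∃ p, IsLeast (NewsVals ωlo ωhi x γ1 γ2) p)
    (hint : ((γ1, γ2, (1 : ℝ)) : ℝ × ℝ × ℝ) ∈ interior
      {q : ℝ × ℝ × ℝ | ∃ μ : Measure ℝ, IsFiniteMeasure μ ∧
        μ (Set.Icc ωlo ωhi)ᶜ = 0 ∧ ∃ s1 s2 : ℝ, 0 ≤ s1 ∧ 0 ≤ s2 ∧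
        q.1 = (∫ ω, ω ∂μ) + s1 ∧ q.2.1 = (∫ ω, ω ^ 2 ∂μ) + s2 ∧
        q.2.2 = (μ Set.univ).toReal})
    (ybar : Fin 2 → Fin 3 → ℝ) (zbar : Fin 2 → ℝ)
    (hfeas : News2Feasible ωlo ωhi x γ1 γ2 ybar zbar)
    (hminN2 : ∀ y z, News2Feasible ωlo ωhi x γ1 γ2 y z →
      zbar 0 + zbar 1 ≤ z 0 + z 1)
    (hstrong : IsGreatest (NewsSDPVals ωlo ωhi x γ1 γ2) (zbar 0 + zbar 1))
    (hy0 : ∀ k, 0 < ybar k 0) :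
    (IsProbabilityMeasure
        (ENNReal.ofReal (ybar 0 0) • Measure.dirac (ybar 0 1 / ybar 0 0)
          + ENNReal.ofReal (ybar 1 0) • Measure.dirac (ybar 1 1 / ybar 1 0)) ∧
      (ENNReal.ofReal (ybar 0 0) • Measure.dirac (ybar 0 1 / ybar 0 0)
          + ENNReal.ofReal (ybar 1 0) • Measure.dirac (ybar 1 1 / ybar 1 0))
        (Set.Icc ωlo ωhi)ᶜ = 0 ∧
      (∫ ω, ω ∂(ENNReal.ofReal (ybar 0 0) • Measure.dirac (ybar 0 1 / ybar 0 0)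
          + ENNReal.ofReal (ybar 1 0) • Measure.dirac (ybar 1 1 / ybar 1 0)))
        ≤ γ1 ∧
      (∫ ω, ω ^ 2 ∂(ENNReal.ofReal (ybar 0 0) • Measure.dirac (ybar 0 1 / ybar 0 0)
          + ENNReal.ofReal (ybar 1 0) • Measure.dirac (ybar 1 1 / ybar 1 0)))
        ≤ γ2) ∧
    ∀ val ∈ NewsVals ωlo ωhi x γ1 γ2,
      (∫ ω, min (x - ω) 0
          ∂(ENNReal.ofReal (ybar 0 0) • Measure.dirac (ybar 0 1 / ybar 0 0)
            + ENNReal.ofReal (ybar 1 0) • Measure.dirac (ybar 1 1 / ybar 1 0)))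
        ≤ val := by
  simpa only [NewsFeasible, atomicMeasure, Fin.sum_univ_two] using
    newsvendor_recovery_general hfeas hstrong.1 fun k ↦ (mul_div_cancel₀ _ (hy0 k).ne').symm

end
end

section
/- Let a, b ≥ 0 and c ∈ ℝ, and define f on [0, ∞) by f(v) = a(v−b)² + c for 0 ≤ v ≤ b and f(v) = c for v > b. Then for every v ≥ 0, f(v) = min_{k=1,2} max_{ℓ=1,2} g_ℓ^k(v), where g_1^1(v) = g_2^1(v) = a(v−b)² + c, g_1^2(v) = −ab·v + ab² + c, and g_2^2(v) = c. In particular, f is the restriction to [0,∞) of a piecewise SOS-convex function. -/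
open MvPolynomial Matrix
open scoped BigOperators

noncomputable section

def IsSOS {m : ℕ} (p : MvPolynomial (Fin m) ℝ) : Prop :=
  ∃ (J : ℕ) (f : Fin J → MvPolynomial (Fin m) ℝ), p = ∑ j, (f j) ^ 2

def polyHessian {m : ℕ} (f : MvPolynomial (Fin m) ℝ) :
    Matrix (Fin m) (Fin m) (MvPolynomial (Fin m) ℝ) :=
  Matrix.of fun i j => pderiv i (pderiv j f)

def IsSOSConvex {m : ℕ} (f : MvPolynomial (Fin m) ℝ) : Prop :=
  ∃ (s : ℕ) (P : Matrix (Fin s) (Fin m) (MvPolynomial (Fin m) ℝ)),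
    polyHessian f = Pᵀ * P

/-- The SOS-convex pieces of the piecewise quadratic function:
`g_1^1 = g_2^1 = a(v−b)² + c`, `g_1^2 = −ab·v + ab² + c`, `g_2^2 = c`. -/
def pqPieces (a b c : ℝ) (k ℓ : Fin 2) : MvPolynomial (Fin 1) ℝ :=
  if k = 0 then C a * (X 0 - C b) ^ 2 + C c
  else if ℓ = 0 then -(C (a * b)) * X 0 + C (a * b ^ 2) + C c
  else C c

/-! Affine polynomials have zero Hessian. Stacking and rescaling the Hessian factors shows that
SOS-convexity survives sums and nonnegative multiples, and the square of an affine `f` has Hessian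
`∇f ∇fᵀ + ∇f ∇fᵀ`, so every piece is SOS-convex. The function `a(v-b)²` and its chord
`ab(b-v)` over `[0, b]` differ by `a(b-v)v`: on `[0, b]` the chord is nonnegative and lies above
the parabola, and beyond `b` it is nonpositive, so the maximum with `0` truncates it. -/

section Hessian

variable {m : ℕ}

lemma polyHessian_add (f g : MvPolynomial (Fin m) ℝ) :
    polyHessian (f + g) = polyHessian f + polyHessian g := by
  ext1 i j
  simp [polyHessian]

lemma polyHessian_mul (f g : MvPolynomial (Fin m) ℝ) :
    polyHessian (f * g) = f • polyHessian g + g • polyHessian f +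
      vecMulVec (pderiv · f) (pderiv · g) + vecMulVec (pderiv · g) (pderiv · f) := by
  ext1 i j
  simp only [polyHessian, of_apply, Matrix.add_apply, Matrix.smul_apply, vecMulVec_apply,
    Derivation.leibniz, map_add, smul_eq_mul]
  ring

@[simp]
lemma polyHessian_C (r : ℝ) : polyHessian (C r : MvPolynomial (Fin m) ℝ) = 0 := by
  ext1 i j
  simp [polyHessian]

@[simp]
lemma polyHessian_X (k : Fin m) : polyHessian (X k : MvPolynomial (Fin m) ℝ) = 0 := by
  ext1 i j
  obtain rfl | hjk := eq_or_ne k j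
  · simp [polyHessian]
  · rw [polyHessian, of_apply, pderiv_X_of_ne hjk, map_zero, Matrix.zero_apply]

lemma polyHessian_C_mul (r : ℝ) (f : MvPolynomial (Fin m) ℝ) :
    polyHessian (C r * f) = C (σ := Fin m) r • polyHessian f := by
  ext1 i j
  simp [polyHessian_mul, vecMulVec_apply]

end Hessian

namespace IsSOSConvex

variable {m : ℕ} {f g : MvPolynomial (Fin m) ℝ}

lemma of_polyHessian_eq {ι : Type*} [Fintype ι] (P : Matrix ι (Fin m) (MvPolynomial (Fin m) ℝ))
    (h : polyHessian f = Pᵀ * P) : IsSOSConvex f := by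
  let e := Fintype.equivFin ι
  refine ⟨Fintype.card ι, P.submatrix e.symm id, ?_⟩
  rw [transpose_submatrix, submatrix_mul_equiv, submatrix_id_id, h]

lemma of_polyHessian_eq_zero (h : polyHessian f = 0) : IsSOSConvex f :=
  ⟨0, 0, by rw [h, Matrix.mul_zero]⟩

lemma add (hf : IsSOSConvex f) (hg : IsSOSConvex g) : IsSOSConvex (f + g) := by
  obtain ⟨s, P, hP⟩ := hf
  obtain ⟨t, Q, hQ⟩ := hg
  refine of_polyHessian_eq (fromRows P Q) ?_
  rw [polyHessian_add, hP, hQ, transpose_fromRows, fromCols_mul_fromRows]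

lemma C_mul {r : ℝ} (hr : 0 ≤ r) (hf : IsSOSConvex f) : IsSOSConvex (C r * f) := by
  obtain ⟨s, P, hP⟩ := hf
  refine ⟨s, C (σ := Fin m) √r • P, ?_⟩
  rw [polyHessian_C_mul, hP, transpose_smul, Matrix.smul_mul, Matrix.mul_smul, smul_smul, ← map_mul,
    Real.mul_self_sqrt hr]

-- Two equal rows `∇f` in the factor account for the coefficient `2` of the Hessian `2 ∇f ∇fᵀ`.
lemma sq_of_polyHessian_eq_zero (h : polyHessian f = 0) : IsSOSConvex (f ^ 2) := by
  refine ⟨2, of fun _ j => pderiv j f, ?_⟩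
  ext1 i j
  simp [sq, polyHessian_mul, h, vecMulVec_apply, Matrix.mul_apply, two_mul]

end IsSOSConvex

lemma isSOSConvex_pqPieces {a : ℝ} (b c : ℝ) (ha : 0 ≤ a) (k ℓ : Fin 2) :
    IsSOSConvex (pqPieces a b c k ℓ) := by
  have hconst (r : ℝ) : IsSOSConvex (C r : MvPolynomial (Fin 1) ℝ) :=
    .of_polyHessian_eq_zero (polyHessian_C r)
  unfold pqPieces
  split_ifs
  · have hsub : polyHessian (X 0 - C b : MvPolynomial (Fin 1) ℝ) = 0 := by
      rw [sub_eq_add_neg, ← map_neg, polyHessian_add, polyHessian_X, polyHessian_C, add_zero]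
    exact (IsSOSConvex.sq_of_polyHessian_eq_zero hsub).C_mul ha |>.add (hconst c)
  · have hlin : polyHessian (-(C (a * b)) * X 0 : MvPolynomial (Fin 1) ℝ) = 0 := by
      rw [← map_neg, polyHessian_C_mul, polyHessian_X, smul_zero]
    exact (IsSOSConvex.of_polyHessian_eq_zero hlin).add (hconst _) |>.add (hconst c)
  · exact hconst c

section Chord

variable {R : Type*} [CommRing R] [LinearOrder R] [IsStrictOrderedRing R] {a b v : R}

lemma mul_sub_sq_le_mul_mul_sub (ha : 0 ≤ a) (hv : 0 ≤ v) (hvb : v ≤ b) :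
    a * (v - b) ^ 2 ≤ a * b * (b - v) := by
  have hgap : 0 ≤ a * (b - v) * v := mul_nonneg (mul_nonneg ha (sub_nonneg.2 hvb)) hv
  linear_combination hgap

lemma ite_mul_sub_sq_eq_min_max (ha : 0 ≤ a) (hb : 0 ≤ b) (hv : 0 ≤ v) :
    (if v ≤ b then a * (v - b) ^ 2 else 0) = min (a * (v - b) ^ 2) (max (a * b * (b - v)) 0) := by
  split_ifs with hvb
  · exact (min_eq_left (le_max_of_le_left (mul_sub_sq_le_mul_mul_sub ha hv hvb))).symm
  · have hchord : a * b * (b - v) ≤ 0 :=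
      mul_nonpos_of_nonneg_of_nonpos (mul_nonneg ha hb) (sub_nonpos.2 (not_le.1 hvb).le)
    rw [max_eq_right hchord, min_eq_right (mul_nonneg ha (sq_nonneg _))]

end Chord

/-- The piecewise quadratic function
`f(v) = a(v−b)² + c` on `[0, b]`, `= c` for `v > b`, is on `[0, ∞)` the
pointwise `min_{k=1,2} max_{ℓ=1,2}` of the SOS-convex polynomials
`g_1^1 = g_2^1 = a(v−b)² + c`, `g_1^2 = −ab·v + ab² + c`, `g_2^2 = c`; in
particular it is the restriction to `[0, ∞)` of a piecewise SOS-convex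
function. -/
theorem piecewise_quadratic_sosConvex (a b c : ℝ) (ha : 0 ≤ a) (hb : 0 ≤ b) :
    (∀ k ℓ, IsSOSConvex (pqPieces a b c k ℓ)) ∧
    ∀ v : ℝ, 0 ≤ v →
      (if v ≤ b then a * (v - b) ^ 2 + c else c) =
        min (max (eval (fun _ => v) (pqPieces a b c 0 0))
                 (eval (fun _ => v) (pqPieces a b c 0 1)))
            (max (eval (fun _ => v) (pqPieces a b c 1 0))
                 (eval (fun _ => v) (pqPieces a b c 1 1))) := by
  refine ⟨isSOSConvex_pqPieces b c ha, fun v hv => ?_⟩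
  have hquad (ℓ : Fin 2) : eval (fun _ => v) (pqPieces a b c 0 ℓ) = a * (v - b) ^ 2 + c := by
    simp [pqPieces]
  have hchord : eval (fun _ => v) (pqPieces a b c 1 0) = a * b * (b - v) + c := by
    simp only [pqPieces, one_ne_zero, if_false, if_true, map_add, map_mul, map_neg, eval_C, eval_X]
    ring
  have hconst : eval (fun _ => v) (pqPieces a b c 1 1) = 0 + c := by
    simp [pqPieces]
  calc (if v ≤ b then a * (v - b) ^ 2 + c else c)
      = (if v ≤ b then a * (v - b) ^ 2 else 0) + c := by rw [ite_add, zero_add]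
    _ = min (a * (v - b) ^ 2) (max (a * b * (b - v)) 0) + c := by
        rw [ite_mul_sub_sq_eq_min_max ha hb hv]
    _ = _ := by
        rw [hquad, hquad, hchord, hconst, max_self, max_add_add_right, min_add_add_right]

end
end

section
/- For every ε > 0 and every v ∈ ℝ, the Huber loss H_ε(v), defined by H_ε(v) = ½v² if |v| ≤ ε and H_ε(v) = ε|v| − ½ε² otherwise, satisfies H_ε(v) = min_{k=1,2} max_{ℓ=1,2,3,4} g_ℓ^k(v), where g_ℓ^1(v) = ½v² for ℓ=1,…,4, g_1^2(v) = εv − ½ε², g_2^2(v) = −εv − ½ε², g_3^2(v) = ½εv, and g_4^2(v) = −½εv. In particular, the Huber loss is a piecewise SOS-convex function. -/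
open MvPolynomial Matrix
open scoped BigOperators

noncomputable section

/-- The SOS-convex pieces of the Huber loss:
`g_ℓ^1 = ½v²` for `ℓ = 1,…,4`, `g_1^2 = εv − ½ε²`, `g_2^2 = −εv − ½ε²`,
`g_3^2 = ½εv`, `g_4^2 = −½εv`. -/
def huberPieces (ε : ℝ) (k : Fin 2) (ℓ : Fin 4) : MvPolynomial (Fin 1) ℝ :=
  if k = 0 then C (1 / 2 : ℝ) * X 0 ^ 2
  else if ℓ = 0 then C ε * X 0 - C (ε ^ 2 / 2)
  else if ℓ = 1 then -(C ε * X 0) - C (ε ^ 2 / 2)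
  else if ℓ = 2 then C (ε / 2) * X 0
  else -(C (ε / 2) * X 0)

/-!
Affine polynomials have zero Hessian, and the Hessian of `c f²` with `f` affine and `c ≥ 0` is the
rank-one square `2c ∇f ∇fᵀ`, so every piece is SOS-convex. Pairing each piece with its reflection
turns the maximum of the affine pieces into `max (ε|v| − ½ε²) (½ε|v|)`. For `|v| ≤ ε` the second
entry already dominates `½v²`; for `|v| > ε` the first entry is the larger one, and it lies below
`½v²` because the difference is `½(|v| − ε)²`.
-/

section SOSConvex

variable {m : ℕ}

theorem polyHessian_eq_zero_of_totalDegree_le_one {f : MvPolynomial (Fin m) ℝ}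
    (hf : f.totalDegree ≤ 1) : polyHessian f = 0 := by
  ext i j d
  have hdeg : f.totalDegree < (d + Finsupp.single i 1 + Finsupp.single j 1).degree := by
    simp only [map_add, Finsupp.degree_single]
    lia
  simp [polyHessian, coeff_pderiv, coeff_eq_zero_of_totalDegree_lt hdeg]

theorem isSOSConvex_of_totalDegree_le_one {f : MvPolynomial (Fin m) ℝ}
    (hf : f.totalDegree ≤ 1) : IsSOSConvex f :=
  ⟨0, 0, by rw [polyHessian_eq_zero_of_totalDegree_le_one hf, Matrix.mul_zero]⟩

theorem polyHessian_C_mul_sq (c : ℝ) (f : MvPolynomial (Fin m) ℝ) :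
    polyHessian (C c * f ^ 2) =
      (C (2 * c) : MvPolynomial (Fin m) ℝ) •
        (vecMulVec (pderiv · f) (pderiv · f) + f • polyHessian f) := by
  ext1 i j
  simp only [polyHessian, of_apply, Matrix.smul_apply, Matrix.add_apply, vecMulVec_apply,
    smul_eq_mul, pow_two, pderiv_mul, pderiv_C, zero_mul, zero_add, map_add, C_mul, map_ofNat]
  ring

theorem isSOSConvex_C_mul_sq {c : ℝ} (hc : 0 ≤ c) {f : MvPolynomial (Fin m) ℝ}
    (hf : f.totalDegree ≤ 1) : IsSOSConvex (C c * f ^ 2) := by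
  refine ⟨1, of fun _ i => C √(2 * c) * pderiv i f, ?_⟩
  have hsqrt : (C (2 * c) : MvPolynomial (Fin m) ℝ) = C √(2 * c) * C √(2 * c) := by
    rw [← C_mul, Real.mul_self_sqrt (by positivity)]
  rw [polyHessian_C_mul_sq, polyHessian_eq_zero_of_totalDegree_le_one hf, smul_zero, add_zero,
    hsqrt]
  ext1 i j
  simp only [Matrix.smul_apply, vecMulVec_apply, smul_eq_mul, mul_apply, transpose_apply, of_apply,
    Fin.sum_univ_one]
  ring

end SOSConvex

theorem isSOSConvex_huberPieces (ε : ℝ) (k : Fin 2) (ℓ : Fin 4) :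
    IsSOSConvex (huberPieces ε k ℓ) := by
  have hlin (a : ℝ) : (C a * X 0 : MvPolynomial (Fin 1) ℝ).totalDegree ≤ 1 :=
    (totalDegree_mul _ _).trans (by rw [totalDegree_C, totalDegree_X])
  have hlin_neg (a : ℝ) : (-(C a * X 0) : MvPolynomial (Fin 1) ℝ).totalDegree ≤ 1 :=
    (totalDegree_neg _).trans_le (hlin a)
  unfold huberPieces
  split_ifs
  · exact isSOSConvex_C_mul_sq (by norm_num) (totalDegree_X _).le
  · exact isSOSConvex_of_totalDegree_le_one ((totalDegree_sub_C_le _ _).trans (hlin _))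
  · exact isSOSConvex_of_totalDegree_le_one ((totalDegree_sub_C_le _ _).trans (hlin_neg _))
  · exact isSOSConvex_of_totalDegree_le_one (hlin _)
  · exact isSOSConvex_of_totalDegree_le_one (hlin_neg _)

theorem sup'_univ_fin_add_two {α : Type*} [SemilatticeSup α] {n : ℕ} (f : Fin (n + 2) → α) :
    Finset.univ.sup' Finset.univ_nonempty f =
      f 0 ⊔ Finset.univ.sup' Finset.univ_nonempty fun i : Fin (n + 1) => f i.succ := by
  simp only [Fin.univ_succ (n + 1), Finset.sup'_cons Finset.univ_nonempty.map, Finset.sup'_map]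
  rfl

theorem sup'_eval_huberPieces_zero (ε v : ℝ) :
    (Finset.univ.sup' Finset.univ_nonempty fun ℓ : Fin 4 =>
      eval (fun _ => v) (huberPieces ε 0 ℓ)) = v ^ 2 / 2 := by
  have heval (ℓ : Fin 4) : eval (fun _ => v) (huberPieces ε 0 ℓ) = v ^ 2 / 2 := by
    simp [huberPieces, inv_mul_eq_div]
  simp only [heval, Finset.sup'_const]

theorem sup'_eval_huberPieces_one {ε : ℝ} (hε : 0 ≤ ε) (v : ℝ) :
    (Finset.univ.sup' Finset.univ_nonempty fun ℓ : Fin 4 =>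
      eval (fun _ => v) (huberPieces ε 1 ℓ)) = max (ε * |v| - ε ^ 2 / 2) (ε / 2 * |v|) := by
  have max_neg_mul {a : ℝ} (ha : 0 ≤ a) : max (a * v) (-(a * v)) = a * |v| := by
    rw [← abs_eq_max_neg, abs_mul, abs_of_nonneg ha]
  calc
    _ = max (max (ε * v - ε ^ 2 / 2) (-(ε * v) - ε ^ 2 / 2))
          (max (ε / 2 * v) (-(ε / 2 * v))) := by
      simp [sup'_univ_fin_add_two, huberPieces, max_assoc]
    _ = max (ε * |v| - ε ^ 2 / 2) (ε / 2 * |v|) := by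
      rw [max_sub_sub_right, max_neg_mul hε, max_neg_mul (div_nonneg hε zero_le_two)]

/-- The Huber loss `H_ε` with threshold `ε`. The two branches agree at `|v| = ε`, so the choice of
`≤` over `<` is immaterial. -/
def huberLoss (ε v : ℝ) : ℝ :=
  if |v| ≤ ε then v ^ 2 / 2 else ε * |v| - ε ^ 2 / 2

theorem huberLoss_eq_min_max {ε : ℝ} (hε : 0 ≤ ε) (v : ℝ) :
    huberLoss ε v = min (v ^ 2 / 2) (max (ε * |v| - ε ^ 2 / 2) (ε / 2 * |v|)) := by
  unfold huberLoss
  split_ifs with hv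
  · have hquad : v ^ 2 / 2 ≤ ε / 2 * |v| := by
      rw [← sq_abs v]
      linarith [mul_le_mul_of_nonneg_right hv (abs_nonneg v)]
    rw [min_eq_left (hquad.trans (le_max_right _ _))]
  · have hslope : ε / 2 * |v| ≤ ε * |v| - ε ^ 2 / 2 := by
      linarith [mul_le_mul_of_nonneg_left (not_le.mp hv).le hε]
    have htangent : ε * |v| - ε ^ 2 / 2 ≤ v ^ 2 / 2 := by
      rw [← sq_abs v]
      linarith [sq_nonneg (|v| - ε)]
    rw [max_eq_left hslope, min_eq_right htangent]

/-- The Huber loss `H_ε` is the pointwise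
`min_{k=1,2} max_{ℓ=1,…,4}` of the SOS-convex polynomials `g_ℓ^1 = ½v²`,
`g_1^2 = εv − ½ε²`, `g_2^2 = −εv − ½ε²`, `g_3^2 = ½εv`, `g_4^2 = −½εv`; in
particular the Huber loss is a piecewise SOS-convex function. -/
theorem huber_piecewise_sosConvex (ε : ℝ) (hε : 0 < ε) :
    (∀ k ℓ, IsSOSConvex (huberPieces ε k ℓ)) ∧
    ∀ v : ℝ,
      (if |v| ≤ ε then v ^ 2 / 2 else ε * |v| - ε ^ 2 / 2) =
        min (Finset.univ.sup' Finset.univ_nonempty fun ℓ : Fin 4 =>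
              eval (fun _ => v) (huberPieces ε 0 ℓ))
            (Finset.univ.sup' Finset.univ_nonempty fun ℓ : Fin 4 =>
              eval (fun _ => v) (huberPieces ε 1 ℓ)) := by
  refine ⟨isSOSConvex_huberPieces ε, fun v => ?_⟩
  rw [sup'_eval_huberPieces_zero, sup'_eval_huberPieces_one hε.le]
  exact huberLoss_eq_min_max hε.le v

end
end
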